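/- arXiv:1305.6492 — 3 statements merged into one kernel-verified Lean document; each statement's English description precedes it below -/
import Mathlib

section
/- For every t ∈ ℤ^K one has h⁻(A, x^t) = 0; that is, the Tate cohomology of the twisted polynomial ring A with respect to any twisted involution ⋆_t is concentrated in the even part h⁺. -/
/-! ### Tate cohomology of an abelian group with involution -/

def kerP {M : Type*} [AddCommGroup M] (f : M →+ M) : AddSubgroup M :=
  (AddMonoidHom.id M - f).ker

def kerM {M : Type*} [AddCommGroup M] (f : M →+ M) : AddSubgroup M :=
  (AddMonoidHom.id M + f).ker

def imP {M : Type*} [AddCommGroup M] (f : M →+ M) : AddSubgroup M :=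
  (AddMonoidHom.id M + f).range

def imM {M : Type*} [AddCommGroup M] (f : M →+ M) : AddSubgroup M :=
  (AddMonoidHom.id M - f).range

abbrev hPlus {M : Type*} [AddCommGroup M] (f : M →+ M) :=
  kerP f ⧸ (imP f).addSubgroupOf (kerP f)

abbrev hMinus {M : Type*} [AddCommGroup M] (f : M →+ M) :=
  kerM f ⧸ (imM f).addSubgroupOf (kerM f)

def hPlusMk {M : Type*} [AddCommGroup M] (f : M →+ M) (x : M) (hx : x ∈ kerP f) :
    hPlus f := QuotientAddGroup.mk ⟨x, hx⟩

def hMinusMk {M : Type*} [AddCommGroup M] (f : M →+ M) (x : M) (hx : x ∈ kerM f) :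
    hMinus f := QuotientAddGroup.mk ⟨x, hx⟩


/-! ### The twisted polynomial ring and its duality involution -/

abbrev TwGens (I J : Type) := (I × Bool) ⊕ J
abbrev TwMon (I J K : Type) := (TwGens I J → ℕ) × (K → ℤ)
abbrev TwPolyRing (I J K : Type) := AddMonoidAlgebra ℤ (TwMon I J K)

variable {I J K : Type}

def twSwap : TwGens I J → TwGens I J
  | Sum.inl (i, b) => Sum.inl (i, !b)
  | Sum.inr j => Sum.inr j

def twTwist [Fintype I] [Fintype J] (c : I → K → ℤ) (m : J → K → ℤ)
    (f : TwGens I J → ℕ) : K → ℤ :=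
  fun k => (∑ i : I, ((f (Sum.inl (i, false)) : ℤ) + (f (Sum.inl (i, true)) : ℤ)) * c i k)
    + ∑ j : J, (f (Sum.inr j) : ℤ) * m j k

lemma twTwist_add [Fintype I] [Fintype J] (c : I → K → ℤ) (m : J → K → ℤ)
    (f f' : TwGens I J → ℕ) :
    twTwist c m (f + f') = twTwist c m f + twTwist c m f' := by
  funext k
  simp only [twTwist, Pi.add_apply, Nat.cast_add, add_mul, Finset.sum_add_distrib]
  ring

lemma twTwist_zero [Fintype I] [Fintype J] (c : I → K → ℤ) (m : J → K → ℤ) :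
    twTwist c m (0 : TwGens I J → ℕ) = 0 := by
  funext k
  simp [twTwist]

def twStarMon [Fintype I] [Fintype J] (c : I → K → ℤ) (m : J → K → ℤ) :
    TwMon I J K →+ TwMon I J K where
  toFun := fun fg => (fg.1 ∘ twSwap, -fg.2 + twTwist c m fg.1)
  map_zero' := by
    refine Prod.ext rfl ?_
    simp [twTwist_zero]
  map_add' := by
    rintro ⟨f, g⟩ ⟨f', g'⟩
    refine Prod.ext rfl ?_
    show -(g + g') + twTwist c m (f + f') = (-g + twTwist c m f) + (-g' + twTwist c m f')
    rw [twTwist_add]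
    abel

noncomputable def twStar [Fintype I] [Fintype J] (c : I → K → ℤ) (m : J → K → ℤ) :
    TwPolyRing I J K →+* TwPolyRing I J K :=
  AddMonoidAlgebra.mapDomainRingHom ℤ (twStarMon c m)

noncomputable def twX (t : K → ℤ) : TwPolyRing I J K :=
  AddMonoidAlgebra.single ((0 : TwGens I J → ℕ), t) 1

noncomputable def twStarT [Fintype I] [Fintype J] (c : I → K → ℤ) (m : J → K → ℤ)
    (t : K → ℤ) : TwPolyRing I J K →+ TwPolyRing I J K :=
  (AddMonoidHom.mulRight (twX t)).comp (twStar c m).toAddMonoidHom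

def sgm [Fintype I] [Fintype J] (c : I → K → ℤ) (m : J → K → ℤ) (t : K → ℤ)
    (g : TwMon I J K) : TwMon I J K := twStarMon c m g + ((0 : TwGens I J → ℕ), t)

lemma twSwap_twSwap (x : TwGens I J) : twSwap (twSwap x) = x := by
  rcases x with ⟨i, b⟩ | j <;> simp [twSwap]

lemma twTwist_swap [Fintype I] [Fintype J] (c : I → K → ℤ) (m : J → K → ℤ)
    (f : TwGens I J → ℕ) : twTwist c m (f ∘ twSwap) = twTwist c m f := by
  funext k
  simp [twTwist, twSwap, add_comm]

lemma sgm_sgm [Fintype I] [Fintype J] (c : I → K → ℤ) (m : J → K → ℤ) (t : K → ℤ)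
    (g : TwMon I J K) : sgm c m t (sgm c m t g) = g := by
  obtain ⟨f, v⟩ := g
  refine Prod.ext ?_ ?_
  · funext x
    simp [sgm, twStarMon, twSwap_twSwap]
  · simp [sgm, twStarMon, twTwist_swap]
    abel

lemma twStarT_single [Fintype I] [Fintype J] (c : I → K → ℤ) (m : J → K → ℤ) (t : K → ℤ)
    (g : TwMon I J K) (n : ℤ) :
    twStarT c m t (AddMonoidAlgebra.single g n) = AddMonoidAlgebra.single (sgm c m t g) n := by
  simp [twStarT, twStar, twX, sgm, AddMonoidAlgebra.single_mul_single]

lemma twStarT_coeff [Fintype I] [Fintype J] (c : I → K → ℤ) (m : J → K → ℤ) (t : K → ℤ)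
    (a : TwPolyRing I J K) (g : TwMon I J K) :
    (twStarT c m t a).coeff g = a.coeff (sgm c m t g) := by
  classical
  induction a using AddMonoidAlgebra.induction_linear with
  | zero => simp
  | add x y hx hy => simp [hx, hy]
  | single h n =>
    rw [twStarT_single, AddMonoidAlgebra.coeff_single, AddMonoidAlgebra.coeff_single,
      Finsupp.single_apply, Finsupp.single_apply]
    have : sgm c m t h = g ↔ h = sgm c m t g :=
      ⟨fun e => by rw [← e, sgm_sgm], fun e => by rw [e, sgm_sgm]⟩
    simp only [this]

lemma mem_imM_of_mem_kerM [Fintype I] [Fintype J] (c : I → K → ℤ) (m : J → K → ℤ) (t : K → ℤ)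
    (a : TwPolyRing I J K) (ha : a ∈ kerM (twStarT c m t)) : a ∈ imM (twStarT c m t) := by
  classical
  have h0 : a + twStarT c m t a = 0 := ha
  have h1 : ∀ g, a.coeff g + a.coeff (sgm c m t g) = 0 := by
    intro g
    rw [← twStarT_coeff, ← Finsupp.add_apply, ← AddMonoidAlgebra.coeff_add, h0]
    rfl
  let r : TwMon I J K → TwMon I J K → Prop := WellOrderingRel
  refine ⟨AddMonoidAlgebra.ofCoeff (a.coeff.filter (fun g => r g (sgm c m t g))), ?_⟩
  show _ - twStarT c m t _ = a
  ext g
  rw [AddMonoidAlgebra.coeff_sub, Finsupp.sub_apply, twStarT_coeff]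
  simp only [AddMonoidHom.id_apply, Finsupp.filter_apply, sgm_sgm]
  have h := h1 g
  rcases trichotomous_of r g (sgm c m t g) with hr | hr | hr
  · have hn : ¬ r (sgm c m t g) g := asymm_of r hr
    simp [hr, hn]
  · rw [← hr] at h ⊢
    have : a.coeff g = 0 := by omega
    simp [this]
  · have hn : ¬ r g (sgm c m t g) := asymm_of r hr
    simp only [hr, hn, if_true, if_false]
    omega

/-- For every `t ∈ ℤ^K` one has `h⁻(A, x^t) = 0`: the Tate cohomology of
the twisted polynomial ring `A` with respect to any twisted involution `⋆_t` is
concentrated in the even part `h⁺`. -/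
theorem statement7 {I J K : Type} [Fintype I] [Fintype J] [Fintype K]
    (c : I → K → ℤ) (m : J → K → ℤ) (t : K → ℤ) :
    ∀ z : hMinus (twStarT c m t), z = 0 := by
  intro z
  induction z using QuotientAddGroup.induction_on with
  | H z =>
    rw [QuotientAddGroup.eq_zero_iff]
    exact mem_imM_of_mem_kerM c m t z.1 z.2
end

section
/- Assume that the mod-2 reductions m̄ʲ (j ∈ J) of the twist vectors are linearly independent over 𝔽₂, and let t ∈ ℤ^K be such that t̄ lies in their 𝔽₂-span, so that there is a unique j₀ ∈ {0,1}^J with M̄·j̄₀ = t̄. Set k₀ := (M·j₀ + t)/2 ∈ ℤ^K and ζ_t := μ^{j₀}·x^{k₀} ∈ A (where μ^{j₀} := ∏_j μ_j^{(j₀)_j}). Then ζ_t is ⋆_t-self-dual, i.e. ζ_t⋆·x^t = ζ_t, and multiplication by ζ_t induces isomorphisms h⁺(A) → h⁺(A, x^t) and h⁻(A) → h⁻(A, x^t). -/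
variable {I J K : Type}

lemma tateIso {M N : Type*} [AddCommGroup M] [AddCommGroup N] (φ : M →+ N)
    (KM IM : AddSubgroup M) (KN IN : AddSubgroup N)
    (hK : ∀ a ∈ KM, φ a ∈ KN) (hI : ∀ a ∈ IM, φ a ∈ IN)
    (hinj : ∀ a ∈ KM, φ a ∈ IN → a ∈ IM)
    (hsurj : ∀ b ∈ KN, ∃ a ∈ KM, φ a - b ∈ IN) :
    ∃ e : (KM ⧸ IM.addSubgroupOf KM) ≃+ (KN ⧸ IN.addSubgroupOf KN),
      ∀ (a : M) (ha : a ∈ KM) (hb : φ a ∈ KN),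
        e (QuotientAddGroup.mk ⟨a, ha⟩) = QuotientAddGroup.mk ⟨φ a, hb⟩ := by
  let ψ : KM →+ KN := (φ.comp KM.subtype).codRestrict KN (fun a => hK a a.2)
  let q : (KM ⧸ IM.addSubgroupOf KM) →+ (KN ⧸ IN.addSubgroupOf KN) :=
    QuotientAddGroup.map _ _ ψ (fun a ha => hI a ha)
  refine ⟨AddEquiv.ofBijective q ⟨?_, ?_⟩, fun a ha hb => rfl⟩
  · rw [injective_iff_map_eq_zero]
    intro x
    induction x using QuotientAddGroup.induction_on with
    | H a =>
      intro h
      rw [QuotientAddGroup.eq_zero_iff]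
      have h' : ((ψ a : KN) : KN ⧸ IN.addSubgroupOf KN) = 0 := h
      rw [QuotientAddGroup.eq_zero_iff] at h'
      exact hinj a a.2 h'
  · intro y
    induction y using QuotientAddGroup.induction_on with
    | H b =>
      obtain ⟨a, ha, hab⟩ := hsurj b b.2
      refine ⟨QuotientAddGroup.mk ⟨a, ha⟩, ?_⟩
      show ((ψ ⟨a, ha⟩ : KN) : KN ⧸ IN.addSubgroupOf KN) = _
      rw [← sub_eq_zero, ← QuotientAddGroup.mk_sub, QuotientAddGroup.eq_zero_iff]
      exact hab

/-- an (anti)symmetric finitely supported function vanishing at fixed points is a norm -/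
lemma exists_halve {X : Type} (τ : X → X) (hτ : ∀ x, τ (τ x) = x) (ε : ℤ) (hε : ε * ε = 1)
    (b : X →₀ ℤ) (hb : ∀ x, b (τ x) = ε * b x) (h0 : ∀ x, τ x = x → b x = 0) :
    ∃ w : X →₀ ℤ, ∀ x, w x + ε * w (τ x) = b x := by
  classical
  let _ : LinearOrder X := linearOrderOfSTO WellOrderingRel
  refine ⟨b.filter (fun x => x < τ x), fun x => ?_⟩
  rw [Finsupp.filter_apply, Finsupp.filter_apply, hτ, hb]
  rcases lt_trichotomy x (τ x) with h | h | h
  · rw [if_pos h, if_neg (not_lt.2 h.le)]; ring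
  · rw [← h, if_neg (lt_irrefl _), h0 x h.symm]; simp
  · rw [if_neg (not_lt.2 h.le), if_pos h, ← mul_assoc, hε]; ring

section abs
variable {X : Type} [AddCommMonoid X] [IsLeftCancelAdd X]

/-- abstract version, sign `ε` -/
lemma absMain (σ τ : X → X) (hτ : ∀ x, τ (τ x) = x)
    (z : X) (hz : ∀ u, τ (z + u) = z + σ u) (hfix : ∀ v, τ v = v → ∃ u, v = z + u)
    (S T : AddMonoidAlgebra ℤ X →+ AddMonoidAlgebra ℤ X)
    (hS : ∀ a u, (S a).coeff u = a.coeff (σ u)) (hT : ∀ a u, (T a).coeff u = a.coeff (τ u))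
    (ε : ℤ) (hε : ε * ε = 1) :
    (∀ a, S a = ε • a → T (AddMonoidAlgebra.single z 1 * a) =
        ε • (AddMonoidAlgebra.single z 1 * a)) ∧
    (∀ w, AddMonoidAlgebra.single z 1 * (w + ε • S w) =
      AddMonoidAlgebra.single z 1 * w + ε • T (AddMonoidAlgebra.single z 1 * w)) ∧
    (∀ a w, AddMonoidAlgebra.single z 1 * a = w + ε • T w → ∃ w', w' + ε • S w' = a) ∧
    (∀ b, T b = ε • b → ∃ a, S a = ε • a ∧ ∃ w, w + ε • T w =
        AddMonoidAlgebra.single z 1 * a - b) := by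
  have c1 : ∀ (a : AddMonoidAlgebra ℤ X) u,
      (AddMonoidAlgebra.single z 1 * a).coeff (z + u) = a.coeff u := by
    intro a u
    rw [AddMonoidAlgebra.coeff_single_mul_eq_mul_coeff (m₂ := u)]
    · simp
    · intro m' _; exact add_right_inj z
  have c2 : ∀ (a : AddMonoidAlgebra ℤ X) v, (¬ ∃ u, v = z + u) →
      (AddMonoidAlgebra.single z 1 * a).coeff v = 0 := fun a v hv =>
    AddMonoidAlgebra.coeff_single_mul_of_forall_add_ne _ _ (fun d hd => hv ⟨d, hd.symm⟩)
  have hz' : ∀ v, (¬ ∃ u, v = z + u) → ¬ ∃ u, τ v = z + u := by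
    rintro v hv ⟨u, hu⟩
    exact hv ⟨σ u, by rw [← hz, ← hu, hτ]⟩
  have hTz : ∀ a, T (AddMonoidAlgebra.single z 1 * a) = AddMonoidAlgebra.single z 1 * S a := by
    intro a
    ext v
    rw [hT]
    by_cases hv : ∃ u, v = z + u
    · obtain ⟨u, rfl⟩ := hv
      rw [hz, c1, c1, hS]
    · rw [c2 _ _ hv, c2 _ _ (hz' v hv)]
  let ρ : AddMonoidAlgebra ℤ X → AddMonoidAlgebra ℤ X := fun a =>
    AddMonoidAlgebra.ofCoeff (a.coeff.comapDomain (z + ·) (add_right_injective z).injOn)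
  have hρ : ∀ a u, (ρ a).coeff u = a.coeff (z + u) := fun a u => rfl
  refine ⟨?_, ?_, ?_, ?_⟩
  · intro a ha
    rw [hTz, ha, mul_smul_comm]
  · intro w
    rw [hTz, mul_add, mul_smul_comm]
  · intro a w h
    refine ⟨ρ w, ?_⟩
    ext u
    rw [← c1 a u, h]
    simp [hS, hT, hρ, hz, -zsmul_eq_mul]
  · intro b hb
    have hb' : ∀ v, b.coeff (τ v) = ε * b.coeff v := by
      intro v
      rw [← hT, hb]; simp [-zsmul_eq_mul]
    refine ⟨ρ b, ?_, ?_⟩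
    · ext u
      rw [hS, hρ, ← hz, hb']
      simp [hρ, -zsmul_eq_mul]
    · have e1 : ∀ v, (AddMonoidAlgebra.single z 1 * ρ b - b).coeff (τ v) =
          ε * (AddMonoidAlgebra.single z 1 * ρ b - b).coeff v := by
        intro v
        rw [AddMonoidAlgebra.coeff_sub, Finsupp.sub_apply, Finsupp.sub_apply, hb']
        by_cases hv : ∃ u, v = z + u
        · obtain ⟨u, rfl⟩ := hv
          rw [hz, c1, c1, hρ, hρ, ← hz, hb']; ring
        · rw [c2 _ _ hv, c2 _ _ (hz' v hv)]; ring
      have e2 : ∀ v, τ v = v → (AddMonoidAlgebra.single z 1 * ρ b - b).coeff v = 0 := by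
        intro v hv
        obtain ⟨u, rfl⟩ := hfix v hv
        rw [AddMonoidAlgebra.coeff_sub, Finsupp.sub_apply, c1, hρ, sub_self]
      obtain ⟨w, hw⟩ := exists_halve τ hτ ε hε _ e1 e2
      refine ⟨AddMonoidAlgebra.ofCoeff w, ?_⟩
      ext v
      rw [← hw v]
      simp [hT, -zsmul_eq_mul]

end abs

lemma twSwap_swap (g : TwGens I J) : twSwap (twSwap g) = g := by
  rcases g with ⟨i, b⟩ | j <;> simp [twSwap]

lemma twStarMon_invol [Fintype I] [Fintype J] (c : I → K → ℤ) (m : J → K → ℤ)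
    (u : TwMon I J K) : twStarMon c m (twStarMon c m u) = u := by
  refine Prod.ext ?_ ?_
  · funext g
    show u.1 (twSwap (twSwap g)) = _
    rw [twSwap_swap]
  · show -(-u.2 + twTwist c m u.1) + twTwist c m (u.1 ∘ twSwap) = u.2
    rw [twTwist_swap]; abel

/-- the twisted monomial involution -/
def twTau [Fintype I] [Fintype J] (c : I → K → ℤ) (m : J → K → ℤ) (t : K → ℤ)
    (u : TwMon I J K) : TwMon I J K := twStarMon c m u + (0, t)

lemma twTau_invol [Fintype I] [Fintype J] (c : I → K → ℤ) (m : J → K → ℤ) (t : K → ℤ)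
    (u : TwMon I J K) : twTau c m t (twTau c m t u) = u := by
  unfold twTau
  rw [map_add, twStarMon_invol]
  refine Prod.ext ?_ ?_
  · funext g; simp [twStarMon]
  · funext k; simp [twStarMon, twTwist_zero]

lemma coeff_twStar [Fintype I] [Fintype J] (c : I → K → ℤ) (m : J → K → ℤ)
    (a : TwPolyRing I J K) (u : TwMon I J K) :
    (twStar c m a).coeff u = a.coeff (twStarMon c m u) := by
  conv_lhs => rw [← twStarMon_invol c m u]
  exact Finsupp.mapDomain_apply (Function.Involutive.injective (twStarMon_invol c m)) _ _

lemma coeff_twStarT [Fintype I] [Fintype J] (c : I → K → ℤ) (m : J → K → ℤ) (t : K → ℤ)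
    (a : TwPolyRing I J K) (u : TwMon I J K) :
    (twStarT c m t a).coeff u = a.coeff (twTau c m t u) := by
  conv_lhs => rw [← twTau_invol c m t u]
  show (twStar c m a * AddMonoidAlgebra.single _ 1).coeff _ = _
  rw [AddMonoidAlgebra.coeff_mul_single_eq_coeff_mul (m₂ := twStarMon c m (twTau c m t u))]
  · rw [coeff_twStar, twStarMon_invol, mul_one]
  · intro m' _; exact add_left_inj _

lemma twFix [Fintype I] [Fintype J] (c : I → K → ℤ) (m : J → K → ℤ)
    (hLI : LinearIndependent (ZMod 2) fun j : J => (fun k => ((m j k : ZMod 2)) : K → ZMod 2))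
    (t : K → ℤ)
    (j₀ : J → ℕ) (hj₀ : ∀ j, j₀ j ≤ 1)
    (hsol : ∀ k : K, (∑ j : J, (j₀ j : ZMod 2) * ((m j k : ℤ) : ZMod 2)) = ((t k : ZMod 2)))
    (k₀ : K → ℤ) (v : TwMon I J K) (hv : twTau c m t v = v) :
    ∃ u : TwMon I J K, v =
      ((fun g => Sum.elim (fun _ => 0) (fun j => j₀ j) g : TwGens I J → ℕ), k₀) + u := by
  have h1 : ∀ g, v.1 (twSwap g) = v.1 g := by
    intro g
    have := congrFun (congrArg Prod.fst hv) g
    simpa [twTau, twStarMon] using this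
  have h2 : ∀ k, -v.2 k + twTwist c m v.1 k + t k = v.2 k := by
    intro k
    have := congrFun (congrArg Prod.snd hv) k
    simpa [twTau, twStarMon] using this
  have h3 : ∀ k, (∑ j : J, (v.1 (Sum.inr j) : ZMod 2) * ((m j k : ℤ) : ZMod 2)) = t k := by
    intro k
    have h4 := h2 k
    have h5 : ∀ i : I, v.1 (Sum.inl (i, true)) = v.1 (Sum.inl (i, false)) :=
      fun i => h1 (Sum.inl (i, false))
    simp only [twTwist, h5] at h4
    have h6 := congrArg (Int.cast : ℤ → ZMod 2) h4
    push_cast at h6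
    simp only [CharTwo.add_self_eq_zero, zero_mul, Finset.sum_const_zero, zero_add,
      CharTwo.neg_eq] at h6
    rw [add_assoc, add_eq_left] at h6
    exact CharTwo.add_eq_zero.1 h6
  have h7 : ∀ j, (v.1 (Sum.inr j) : ZMod 2) - (j₀ j : ZMod 2) = 0 := by
    refine Fintype.linearIndependent_iff.1 hLI _ ?_
    funext k
    simp only [Finset.sum_apply, Pi.smul_apply, smul_eq_mul, sub_mul, Finset.sum_sub_distrib,
      Pi.zero_apply]
    rw [h3, hsol, sub_self]
  have h8 : ∀ j, j₀ j ≤ v.1 (Sum.inr j) := by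
    intro j
    have := sub_eq_zero.1 (h7 j)
    rw [ZMod.natCast_eq_natCast_iff] at this
    have h9 := hj₀ j
    unfold Nat.ModEq at this
    omega
  refine ⟨(fun g => v.1 g - Sum.elim (fun _ => 0) (fun j => j₀ j) g, v.2 - k₀),
    Prod.ext ?_ ?_⟩
  · funext g
    rcases g with g | j
    · simp
    · have := h8 j
      simp; omega
  · simp

/-- Assume the mod-2 reductions `m̄ʲ` of the twist vectors are linearly
independent over `𝔽₂` and let `t ∈ ℤ^K` with `t̄` in their span, so that there is a unique
`j₀ ∈ {0,1}^J` with `M̄·j̄₀ = t̄`.  Set `k₀ := (M·j₀ + t)/2` and `ζ_t := μ^{j₀}·x^{k₀}`.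
Then `ζ_t` is `⋆_t`-self-dual, and multiplication by `ζ_t` induces isomorphisms
`h⁺(A) → h⁺(A, x^t)` and `h⁻(A) → h⁻(A, x^t)`. -/
theorem statement9 {I J K : Type} [Fintype I] [Fintype J] [Fintype K]
    (c : I → K → ℤ) (m : J → K → ℤ)
    (hLI : LinearIndependent (ZMod 2) fun j : J => (fun k => ((m j k : ZMod 2)) : K → ZMod 2))
    (t : K → ℤ)
    (j₀ : J → ℕ) (hj₀ : ∀ j, j₀ j ≤ 1)
    (hsol : ∀ k : K, (∑ j : J, (j₀ j : ZMod 2) * ((m j k : ℤ) : ZMod 2)) = ((t k : ZMod 2)))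
    (k₀ : K → ℤ) (hk₀ : ∀ k : K, 2 * k₀ k = (∑ j : J, (j₀ j : ℤ) * m j k) + t k)
    -- `ζ_t = μ^{j₀}·x^{k₀}`
    (ζ : TwPolyRing I J K)
    (hζdef : ζ = AddMonoidAlgebra.single
      ((fun g => Sum.elim (fun _ => 0) (fun j => j₀ j) g : TwGens I J → ℕ), k₀) 1) :
    twStarT c m t ζ = ζ ∧
    (∃ e : hPlus ((twStar c m).toAddMonoidHom : TwPolyRing I J K →+ TwPolyRing I J K) ≃+
        hPlus (twStarT c m t),
      ∀ (a : TwPolyRing I J K) (ha : a ∈ kerP (twStar c m).toAddMonoidHom)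
        (hb : ζ * a ∈ kerP (twStarT c m t)),
        e (hPlusMk _ a ha) = hPlusMk (twStarT c m t) (ζ * a) hb) ∧
    (∃ e : hMinus ((twStar c m).toAddMonoidHom : TwPolyRing I J K →+ TwPolyRing I J K) ≃+
        hMinus (twStarT c m t),
      ∀ (a : TwPolyRing I J K) (ha : a ∈ kerM (twStar c m).toAddMonoidHom)
        (hb : ζ * a ∈ kerM (twStarT c m t)),
        e (hMinusMk _ a ha) = hMinusMk (twStarT c m t) (ζ * a) hb) := by
  subst hζdef
  set z : TwMon I J K :=
    ((fun g => Sum.elim (fun _ => 0) (fun j => j₀ j) g : TwGens I J → ℕ), k₀) with hzdef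
  have hz0 : twTau c m t z = z := by
    refine Prod.ext ?_ ?_
    · funext g
      rcases g with ⟨i, b⟩ | j <;> simp [twTau, twStarMon, twSwap, hzdef]
    · funext k
      have := hk₀ k
      simp [twTau, twStarMon, twTwist, hzdef]
      linarith
  have hz : ∀ u, twTau c m t (z + u) = z + twStarMon c m u := by
    intro u
    conv_rhs => rw [← hz0]
    unfold twTau
    rw [map_add]; abel
  have hfix := twFix (I := I) c m hLI t j₀ hj₀ hsol k₀
  have key := absMain (twStarMon c m) (twTau c m t) (twTau_invol c m t) z hz hfix
    (twStar c m).toAddMonoidHom (twStarT c m t) (coeff_twStar c m) (coeff_twStarT c m t)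
  obtain ⟨p1, p2, p3, p4⟩ := key 1 (by norm_num)
  obtain ⟨q1, q2, q3, q4⟩ := key (-1) (by norm_num)
  have eP : ∀ (f : TwPolyRing I J K →+ TwPolyRing I J K) a,
      a ∈ kerP f ↔ f a = (1 : ℤ) • a := by
    intro f a
    rw [one_smul, eq_comm, ← sub_eq_zero]; rfl
  have eM : ∀ (f : TwPolyRing I J K →+ TwPolyRing I J K) a,
      a ∈ kerM f ↔ f a = (-1 : ℤ) • a := by
    intro f a
    rw [neg_one_smul, ← add_eq_zero_iff_eq_neg, add_comm]; rfl
  have iP : ∀ (f : TwPolyRing I J K →+ TwPolyRing I J K) a,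
      a ∈ imP f ↔ ∃ w, w + (1 : ℤ) • f w = a := by
    intro f a
    simp only [one_smul]; rfl
  have iM : ∀ (f : TwPolyRing I J K →+ TwPolyRing I J K) a,
      a ∈ imM f ↔ ∃ w, w + (-1 : ℤ) • f w = a := by
    intro f a
    simp only [neg_one_smul, ← sub_eq_add_neg]; rfl
  refine ⟨?_, ?_, ?_⟩
  · have := p1 1 (by simp)
    simpa using this
  · refine tateIso (AddMonoidHom.mulLeft (AddMonoidAlgebra.single z (1 : ℤ))) _ _ _ _ ?_ ?_ ?_ ?_
    · intro a ha
      exact (eP _ _).2 (p1 a ((eP _ _).1 ha))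
    · intro a ha
      obtain ⟨w, rfl⟩ := (iP _ _).1 ha
      exact (iP _ _).2 ⟨_, (p2 w).symm⟩
    · intro a _ h
      obtain ⟨w, hw⟩ := (iP _ _).1 h
      exact (iP _ _).2 (p3 a w hw.symm)
    · intro b hb
      obtain ⟨a, ha, hw⟩ := p4 b ((eP _ _).1 hb)
      exact ⟨a, (eP _ _).2 ha, (iP _ _).2 hw⟩
  · refine tateIso (AddMonoidHom.mulLeft (AddMonoidAlgebra.single z (1 : ℤ))) _ _ _ _ ?_ ?_ ?_ ?_
    · intro a ha
      exact (eM _ _).2 (q1 a ((eM _ _).1 ha))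
    · intro a ha
      obtain ⟨w, rfl⟩ := (iM _ _).1 ha
      exact (iM _ _).2 ⟨_, (q2 w).symm⟩
    · intro a _ h
      obtain ⟨w, hw⟩ := (iM _ _).1 h
      exact (iM _ _).2 (q3 a w hw.symm)
    · intro b hb
      obtain ⟨a, ha, hw⟩ := q4 b ((eM _ _).1 hb)
      exact ⟨a, (eM _ _).2 ha, (iM _ _).2 hw⟩
end

section
/- Let (A,⋆) be a ⋆-ring, l ∈ A^× a unit with l⋆ = l⁻¹, and ζ ∈ A a ⋆_l-self-dual element (ζ⋆·l = ζ) such that multiplication by ζ induces isomorphisms h⁺(A,⋆) → h⁺(A,⋆_l) and h⁻(A,⋆) → h⁻(A,⋆_l). Then: (a) for every μ ∈ A with μ⋆ = μ which is not a zero divisor, the ideal A·μ is stable under ⋆ and under ⋆_l, both involutions descend to the quotient ring A/Aμ, and multiplication by the class of ζ induces isomorphisms h^±(A/Aμ, ⋆) → h^±(A/Aμ, ⋆_l); (b) for every λ ∈ A such that λ, λ⋆ is a regular sequence on A, the ideal 𝔞 := Aλ + Aλ⋆ is stable under ⋆ and under ⋆_l, both involutions descend to A/𝔞, and multiplication by the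 class of ζ induces isomorphisms h^±(A/𝔞, ⋆) → h^±(A/𝔞, ⋆_l). -/
/-- The `l`-twisted involution `a ↦ a⋆ · l` on a `⋆`-ring `A`. -/
def twistL {A : Type*} [CommRing A] (σ : A →+* A) (l : A) : A →+ A :=
  (AddMonoidHom.mulRight l).comp σ.toAddMonoidHom



structure TIh {M : Type*} [AddCommGroup M] (s t z : M →+ M) : Prop where
  inj : ∀ x y, s x = x → z x = y + t y → ∃ w, x = w + s w
  surj : ∀ y, t y = y → ∃ x w, s x = x ∧ y = z x + (w + t w)

theorem TIh.of_iso {M : Type*} [AddCommGroup M] (s t z : M →+ M)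
    (K I K' I' : AddSubgroup M)
    (hK : ∀ x, x ∈ K ↔ s x = x) (hK' : ∀ x, x ∈ K' ↔ t x = x)
    (hI : ∀ x, x ∈ I ↔ ∃ w, x = w + s w) (hI' : ∀ x, x ∈ I' ↔ ∃ w, x = w + t w)
    (hz : ∀ x, z (s x) = t (z x))
    (h : ∃ e : (K ⧸ I.addSubgroupOf K) ≃+ (K' ⧸ I'.addSubgroupOf K'),
      ∀ (a : M) (ha : a ∈ K) (hb : z a ∈ K'),
        e (QuotientAddGroup.mk ⟨a, ha⟩) = QuotientAddGroup.mk ⟨z a, hb⟩) : TIh s t z := by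
  obtain ⟨e, he⟩ := h
  have hm : ∀ x, x ∈ K → z x ∈ K' := fun x hx => by
    rw [hK', ← hz, (hK x).1 hx]
  constructor
  · intro x y hx hxy
    have hxK := (hK x).2 hx
    have h1 := he x hxK (hm x hxK)
    have h2 : (QuotientAddGroup.mk ⟨z x, hm x hxK⟩ : K' ⧸ I'.addSubgroupOf K') = 0 := by
      rw [QuotientAddGroup.eq_zero_iff, AddSubgroup.mem_addSubgroupOf]
      exact (hI' _).2 ⟨y, hxy⟩
    rw [h2, map_eq_zero_iff e e.injective, QuotientAddGroup.eq_zero_iff,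
      AddSubgroup.mem_addSubgroupOf] at h1
    exact (hI _).1 h1
  · intro y hy
    have hyK := (hK' y).2 hy
    obtain ⟨q, hq⟩ := e.surjective (QuotientAddGroup.mk ⟨y, hyK⟩)
    obtain ⟨⟨x, hx⟩, rfl⟩ := QuotientAddGroup.mk_surjective q
    rw [he x hx (hm x hx), QuotientAddGroup.eq, AddSubgroup.mem_addSubgroupOf] at hq
    obtain ⟨w, hw⟩ := (hI' _).1 hq
    refine ⟨x, w, (hK x).1 hx, ?_⟩
    rw [← hw]
    simp

theorem TIh.to_iso {M : Type*} [AddCommGroup M] (s t z : M →+ M)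
    (K I K' I' : AddSubgroup M)
    (hK : ∀ x, x ∈ K ↔ s x = x) (hK' : ∀ x, x ∈ K' ↔ t x = x)
    (hI : ∀ x, x ∈ I ↔ ∃ w, x = w + s w) (hI' : ∀ x, x ∈ I' ↔ ∃ w, x = w + t w)
    (hz : ∀ x, z (s x) = t (z x)) (H : TIh s t z) :
    ∃ e : (K ⧸ I.addSubgroupOf K) ≃+ (K' ⧸ I'.addSubgroupOf K'),
      ∀ (a : M) (ha : a ∈ K) (hb : z a ∈ K'),
        e (QuotientAddGroup.mk ⟨a, ha⟩) = QuotientAddGroup.mk ⟨z a, hb⟩ := by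
  have hm : ∀ x, x ∈ K → z x ∈ K' := fun x hx => by
    rw [hK', ← hz, (hK x).1 hx]
  let g : K →+ K' := (z.comp K.subtype).codRestrict K' (fun x => hm x x.2)
  have hg : I.addSubgroupOf K ≤ (I'.addSubgroupOf K').comap g := by
    intro x hx
    rw [AddSubgroup.mem_addSubgroupOf] at hx
    obtain ⟨w, hw⟩ := (hI _).1 hx
    rw [AddSubgroup.mem_comap, AddSubgroup.mem_addSubgroupOf]
    refine (hI' _).2 ⟨z w, ?_⟩
    change z (x : M) = _
    rw [hw, map_add, hz]
  let f := QuotientAddGroup.map (I.addSubgroupOf K) (I'.addSubgroupOf K') g hg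
  have hf : ∀ x : K, f (QuotientAddGroup.mk x) = QuotientAddGroup.mk (g x) := fun x => rfl
  have hbij : Function.Bijective f := by
    constructor
    · rw [injective_iff_map_eq_zero]
      intro q hq
      obtain ⟨x, rfl⟩ := QuotientAddGroup.mk_surjective q
      rw [hf, QuotientAddGroup.eq_zero_iff, AddSubgroup.mem_addSubgroupOf] at hq
      obtain ⟨y, hy⟩ := (hI' _).1 hq
      rw [QuotientAddGroup.eq_zero_iff, AddSubgroup.mem_addSubgroupOf]
      exact (hI _).2 (H.inj x y ((hK _).1 x.2) hy)
    · intro q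
      obtain ⟨y, rfl⟩ := QuotientAddGroup.mk_surjective q
      obtain ⟨x, w, hx, hw⟩ := H.surj y ((hK' _).1 y.2)
      refine ⟨QuotientAddGroup.mk ⟨x, (hK x).2 hx⟩, ?_⟩
      rw [hf, QuotientAddGroup.eq, AddSubgroup.mem_addSubgroupOf]
      refine (hI' _).2 ⟨w, ?_⟩
      change - z x + (y : M) = _
      rw [hw]; abel
  exact ⟨AddEquiv.ofBijective f hbij, fun a ha hb => rfl⟩

theorem TIh.third {M' M M'' : Type*} [AddCommGroup M'] [AddCommGroup M] [AddCommGroup M'']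
    (s' t' z' : M' →+ M') (s t z : M →+ M) (s'' t'' z'' : M'' →+ M'')
    (i : M' →+ M) (p : M →+ M'')
    (hi : ∀ x, i x = 0 → x = 0) (hp : ∀ y, ∃ x, p x = y)
    (hpi : ∀ x, p (i x) = 0) (hex : ∀ x, p x = 0 → ∃ a, x = i a)
    (his : ∀ x, i (s' x) = s (i x)) (hit : ∀ x, i (t' x) = t (i x))
    (hiz : ∀ x, i (z' x) = z (i x))
    (hps : ∀ x, p (s x) = s'' (p x)) (hpt : ∀ x, p (t x) = t'' (p x))
    (hpz : ∀ x, p (z x) = z'' (p x))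
    (hss : ∀ x, s (s x) = x) (htt : ∀ x, t (t x) = x)
    (hz : ∀ x, z (s x) = t (z x))
    (H'1 : TIh s' t' z') (H'2 : TIh (-s') (-t') z')
    (H1 : TIh s t z) (H2 : TIh (-s) (-t) z) : TIh s'' t'' z'' := by
  have hinj : ∀ a b, i a = i b → a = b := fun a b h => by
    have := hi (a - b) (by rw [map_sub, h, sub_self])
    exact sub_eq_zero.1 this
  constructor
  · intro x'' y'' hx hxy
    obtain ⟨x, rfl⟩ := hp x''
    obtain ⟨y, rfl⟩ := hp y''
    obtain ⟨a, ha⟩ := hex (s x - x) (by rw [map_sub, hps, hx, sub_self])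
    obtain ⟨b, hb⟩ := hex (z x - (y + t y)) (by
      rw [map_sub, map_add, hpz, hpt, hxy, sub_self])
    have e1 : (-s') a = a := by
      apply hinj
      rw [AddMonoidHom.neg_apply, map_neg, his, ← ha, map_sub, hss]; abel
    have e2 : z' a = (-b) + (-t') (-b) := by
      apply hinj
      rw [hiz, ← ha, map_sub, hz]
      simp only [AddMonoidHom.neg_apply, map_neg, map_add, neg_neg, hit, ← hb, map_sub, htt]
      abel
    obtain ⟨w, hw⟩ := H'2.inj a (-b) e1 e2
    have e3 : s (x + i w) = x + i w := by
      have : s x = x + i a := by rw [← ha]; abel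
      rw [map_add, this, hw, map_add, AddMonoidHom.neg_apply, map_neg, his]; abel
    have e4 : z (x + i w) = y + t y + i (b + z' w) := by
      rw [map_add, map_add, ← hb, hiz]; abel
    have e5 : t' (b + z' w) = b + z' w := by
      apply hinj
      have h6 : t (z (x + i w)) = z (x + i w) := by rw [← hz, e3]
      rw [e4, map_add, map_add, htt, ← hit, add_comm (t y) y] at h6
      exact add_left_cancel h6
    obtain ⟨u, v, hu, huv⟩ := H'1.surj _ e5
    obtain ⟨q, hq⟩ := H1.inj (x + i w - i u) (y + i v)
      (by rw [map_sub, e3, ← his, hu])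
      (by rw [map_sub, e4, huv, ← hiz]; simp only [map_add, hit]; abel)
    refine ⟨p q, ?_⟩
    rw [← hps, ← map_add, ← hq, map_sub, map_add, hpi, hpi]; simp
  · intro y'' hy
    obtain ⟨y, rfl⟩ := hp y''
    obtain ⟨b, hb⟩ := hex (t y - y) (by rw [map_sub, hpt, hy, sub_self])
    obtain ⟨a, w', ha, hw'⟩ := H'2.surj b (by
      apply hinj
      rw [AddMonoidHom.neg_apply, map_neg, hit, ← hb, map_sub, htt]; abel)
    have e1 : z (i a) = t (y + i w') - (y + i w') := by
      have h1 : z' a = b - w' + t' w' := by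
        rw [hw', AddMonoidHom.neg_apply]; abel
      rw [← hiz, h1]
      simp only [map_add, map_sub, hit, ← hb]; abel
    obtain ⟨w, hw⟩ := H2.inj (i a) (-(y + i w'))
      (by rw [AddMonoidHom.neg_apply, ← his, ← map_neg]; exact congrArg i ha)
      (by rw [e1, AddMonoidHom.neg_apply, map_neg, neg_neg]; abel)
    have hw2 : s w = w - i a := by
      rw [hw, AddMonoidHom.neg_apply]; abel
    obtain ⟨x, v, hx, hv⟩ := H1.surj (y + i w' + z w) (by
      have h1 : t (y + i w') = y + i w' + z (i a) := by rw [e1]; abel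
      rw [map_add, h1, ← hz, hw2, map_sub]; abel)
    refine ⟨p x - p w, p v, ?_, ?_⟩
    · rw [map_sub, ← hps, ← hps, hx, hw2, map_sub, hpi, sub_zero]
    · have h1 := congrArg p hv
      simp only [map_add, hpi, hpz, hpt, add_zero] at h1
      rw [map_sub, eq_sub_of_add_eq h1]; abel

def TI {M : Type*} [AddCommGroup M] (s t z : M →+ M) : Prop :=
  TIh s t z ∧ TIh (-s) (-t) z

theorem TI.third {M' M M'' : Type*} [AddCommGroup M'] [AddCommGroup M] [AddCommGroup M'']
    (s' t' z' : M' →+ M') (s t z : M →+ M) (s'' t'' z'' : M'' →+ M'')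
    (i : M' →+ M) (p : M →+ M'')
    (hi : ∀ x, i x = 0 → x = 0) (hp : ∀ y, ∃ x, p x = y)
    (hpi : ∀ x, p (i x) = 0) (hex : ∀ x, p x = 0 → ∃ a, x = i a)
    (his : ∀ x, i (s' x) = s (i x)) (hit : ∀ x, i (t' x) = t (i x))
    (hiz : ∀ x, i (z' x) = z (i x))
    (hps : ∀ x, p (s x) = s'' (p x)) (hpt : ∀ x, p (t x) = t'' (p x))
    (hpz : ∀ x, p (z x) = z'' (p x))
    (hss : ∀ x, s (s x) = x) (htt : ∀ x, t (t x) = x)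
    (hz : ∀ x, z (s x) = t (z x))
    (H' : TI s' t' z') (H : TI s t z) : TI s'' t'' z'' := by
  refine ⟨TIh.third s' t' z' s t z s'' t'' z'' i p hi hp hpi hex his hit hiz hps hpt hpz
    hss htt hz H'.1 H'.2 H.1 H.2, TIh.third (-s') (-t') z' (-s) (-t) z (-s'') (-t'') z''
    i p hi hp hpi hex ?_ ?_ hiz ?_ ?_ hpz ?_ ?_ ?_ H'.2 ?_ H.2 ?_⟩
  · simp [his]
  · simp [hit]
  · simp [hps]
  · simp [hpt]
  · simp [hss]
  · simp [htt]
  · simp [hz]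
  · simpa using H'.1
  · simpa using H.1

section
variable {M : Type*} [AddCommGroup M] (f : M →+ M) (x : M)
theorem mem_kerP' : x ∈ kerP f ↔ f x = x := by
  simp only [kerP, AddMonoidHom.mem_ker, AddMonoidHom.sub_apply, AddMonoidHom.id_apply,
    sub_eq_zero]
  exact eq_comm
theorem mem_kerM' : x ∈ kerM f ↔ (-f) x = x := by
  simp only [kerM, AddMonoidHom.mem_ker, AddMonoidHom.add_apply, AddMonoidHom.id_apply,
    AddMonoidHom.neg_apply]
  rw [neg_eq_iff_add_eq_zero, add_comm]
theorem mem_imP' : x ∈ imP f ↔ ∃ w, x = w + f w := by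
  simp [imP, AddMonoidHom.mem_range, eq_comm]
theorem mem_imM' : x ∈ imM f ↔ ∃ w, x = w + (-f) w := by
  simp [imM, AddMonoidHom.mem_range, eq_comm, sub_eq_add_neg]
end

theorem TI.to_isos {M : Type*} [AddCommGroup M] (s t z : M →+ M)
    (hz : ∀ x, z (s x) = t (z x)) (H : TI s t z) :
    (∃ e : hPlus s ≃+ hPlus t, ∀ (a : M) (ha : a ∈ kerP s) (hb : z a ∈ kerP t),
        e (hPlusMk s a ha) = hPlusMk t (z a) hb) ∧
    (∃ e : hMinus s ≃+ hMinus t, ∀ (a : M) (ha : a ∈ kerM s) (hb : z a ∈ kerM t),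
        e (hMinusMk s a ha) = hMinusMk t (z a) hb) :=
  ⟨TIh.to_iso s t z _ _ _ _ (mem_kerP' s) (mem_kerP' t) (mem_imP' s) (mem_imP' t) hz H.1,
   TIh.to_iso (-s) (-t) z _ _ _ _ (mem_kerM' s) (mem_kerM' t) (mem_imM' s) (mem_imM' t)
    (by simp [hz]) H.2⟩

theorem TI.of_isos {M : Type*} [AddCommGroup M] (s t z : M →+ M)
    (hz : ∀ x, z (s x) = t (z x))
    (h1 : ∃ e : hPlus s ≃+ hPlus t, ∀ (a : M) (ha : a ∈ kerP s) (hb : z a ∈ kerP t),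
        e (hPlusMk s a ha) = hPlusMk t (z a) hb)
    (h2 : ∃ e : hMinus s ≃+ hMinus t, ∀ (a : M) (ha : a ∈ kerM s) (hb : z a ∈ kerM t),
        e (hMinusMk s a ha) = hMinusMk t (z a) hb) : TI s t z :=
  ⟨TIh.of_iso s t z _ _ _ _ (mem_kerP' s) (mem_kerP' t) (mem_imP' s) (mem_imP' t) hz h1,
   TIh.of_iso (-s) (-t) z _ _ _ _ (mem_kerM' s) (mem_kerM' t) (mem_imM' s) (mem_imM' t)
    (by simp [hz]) h2⟩

/-- the swapped involution on `M × M` -/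
def swapInv {M : Type*} [AddCommGroup M] (s : M →+ M) : M × M →+ M × M :=
  (s.comp (AddMonoidHom.snd M M)).prod (s.comp (AddMonoidHom.fst M M))

theorem TIh.swap {M : Type*} [AddCommGroup M] (s t z : M →+ M)
    (hss : ∀ x, s (s x) = x) (htt : ∀ x, t (t x) = x) :
    TIh (swapInv s) (swapInv t) (z.prodMap z) := by
  constructor
  · rintro ⟨a, b⟩ y hx -
    simp only [swapInv, AddMonoidHom.prod_apply, AddMonoidHom.comp_apply, Prod.mk.injEq,
      AddMonoidHom.coe_fst, AddMonoidHom.coe_snd] at hx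
    exact ⟨(a, 0), by simp [swapInv, hx.2]⟩
  · rintro ⟨a, b⟩ hx
    simp only [swapInv, AddMonoidHom.prod_apply, AddMonoidHom.comp_apply, Prod.mk.injEq,
      AddMonoidHom.coe_fst, AddMonoidHom.coe_snd] at hx
    refine ⟨0, (a, 0), by simp, ?_⟩
    rw [map_zero, zero_add]
    simp [swapInv, hx.2]

theorem swapInv_neg {M : Type*} [AddCommGroup M] (s : M →+ M) :
    -swapInv s = swapInv (-s) := by
  ext <;> simp [swapInv]

theorem TI.swap {M : Type*} [AddCommGroup M] (s t z : M →+ M)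
    (hss : ∀ x, s (s x) = x) (htt : ∀ x, t (t x) = x) :
    TI (swapInv s) (swapInv t) (z.prodMap z) := by
  refine ⟨TIh.swap s t z hss htt, ?_⟩
  rw [swapInv_neg, swapInv_neg]
  exact TIh.swap _ _ z (by simp [hss]) (by simp [htt])


/-- Let `(A,⋆)` be a `⋆`-ring, `l ∈ A^×` a unit with `l⋆ = l⁻¹`, and
`ζ ∈ A` a `⋆_l`-self-dual element such that multiplication by `ζ` induces isomorphisms
`h^±(A,⋆) → h^±(A,⋆_l)`.  Then (a) for every `⋆`-self-dual non-zero-divisor `μ`, the ideal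
`Aμ` is stable under `⋆` and `⋆_l`, both involutions descend to `A/Aμ`, and multiplication
by the class of `ζ` induces isomorphisms `h^±(A/Aμ,⋆) → h^±(A/Aμ,⋆_l)`; (b) likewise for
`𝔞 = Aλ + Aλ⋆` whenever `λ, λ⋆` is a regular sequence on `A`. -/
theorem statement14
    {A : Type*} [CommRing A] (σ : A →+* A) (hσ : ∀ a, σ (σ a) = a)
    (l : Aˣ) (hl : σ l = ((l⁻¹ : Aˣ) : A))
    (ζ : A) (hζ : σ ζ * l = ζ)
    (hisoP : ∃ e : hPlus σ.toAddMonoidHom ≃+ hPlus (twistL σ (l : A)),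
      ∀ (a : A) (ha : a ∈ kerP σ.toAddMonoidHom) (hb : ζ * a ∈ kerP (twistL σ (l : A))),
        e (hPlusMk σ.toAddMonoidHom a ha) = hPlusMk (twistL σ (l : A)) (ζ * a) hb)
    (hisoM : ∃ e : hMinus σ.toAddMonoidHom ≃+ hMinus (twistL σ (l : A)),
      ∀ (a : A) (ha : a ∈ kerM σ.toAddMonoidHom) (hb : ζ * a ∈ kerM (twistL σ (l : A))),
        e (hMinusMk σ.toAddMonoidHom a ha) = hMinusMk (twistL σ (l : A)) (ζ * a) hb) :
    -- (a) quotients by a self-dual non-zero-divisor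
    (∀ μ : A, σ μ = μ → (∀ a : A, μ * a = 0 → a = 0) →
      (∀ a ∈ (Ideal.span {μ} : Ideal A), σ a ∈ (Ideal.span {μ} : Ideal A)) ∧
      (∀ a ∈ (Ideal.span {μ} : Ideal A), σ a * l ∈ (Ideal.span {μ} : Ideal A)) ∧
      ∀ (σq τq : (A ⧸ (Ideal.span {μ} : Ideal A)) →+ (A ⧸ (Ideal.span {μ} : Ideal A))),
        (∀ a : A, σq (Ideal.Quotient.mk _ a) = Ideal.Quotient.mk _ (σ a)) →
        (∀ a : A, τq (Ideal.Quotient.mk _ a) = Ideal.Quotient.mk _ (σ a * l)) →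
        (∃ e : hPlus σq ≃+ hPlus τq,
          ∀ (a : A ⧸ (Ideal.span {μ} : Ideal A)) (ha : a ∈ kerP σq)
            (hb : (Ideal.Quotient.mk _ ζ) * a ∈ kerP τq),
            e (hPlusMk σq a ha) = hPlusMk τq ((Ideal.Quotient.mk _ ζ) * a) hb) ∧
        (∃ e : hMinus σq ≃+ hMinus τq,
          ∀ (a : A ⧸ (Ideal.span {μ} : Ideal A)) (ha : a ∈ kerM σq)
            (hb : (Ideal.Quotient.mk _ ζ) * a ∈ kerM τq),
            e (hMinusMk σq a ha) = hMinusMk τq ((Ideal.Quotient.mk _ ζ) * a) hb)) ∧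
    -- (b) quotients by the ideal generated by a regular sequence `λ, λ⋆`
    (∀ lam : A, (∀ a : A, lam * a = 0 → a = 0) →
      (∀ a : A, σ lam * a ∈ (Ideal.span {lam} : Ideal A) →
        a ∈ (Ideal.span {lam} : Ideal A)) →
      (∀ a ∈ (Ideal.span {lam, σ lam} : Ideal A),
          σ a ∈ (Ideal.span {lam, σ lam} : Ideal A)) ∧
      (∀ a ∈ (Ideal.span {lam, σ lam} : Ideal A),
          σ a * l ∈ (Ideal.span {lam, σ lam} : Ideal A)) ∧
      ∀ (σq τq : (A ⧸ (Ideal.span {lam, σ lam} : Ideal A)) →+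
          (A ⧸ (Ideal.span {lam, σ lam} : Ideal A))),
        (∀ a : A, σq (Ideal.Quotient.mk _ a) = Ideal.Quotient.mk _ (σ a)) →
        (∀ a : A, τq (Ideal.Quotient.mk _ a) = Ideal.Quotient.mk _ (σ a * l)) →
        (∃ e : hPlus σq ≃+ hPlus τq,
          ∀ (a : A ⧸ (Ideal.span {lam, σ lam} : Ideal A)) (ha : a ∈ kerP σq)
            (hb : (Ideal.Quotient.mk _ ζ) * a ∈ kerP τq),
            e (hPlusMk σq a ha) = hPlusMk τq ((Ideal.Quotient.mk _ ζ) * a) hb) ∧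
        (∃ e : hMinus σq ≃+ hMinus τq,
          ∀ (a : A ⧸ (Ideal.span {lam, σ lam} : Ideal A)) (ha : a ∈ kerM σq)
            (hb : (Ideal.Quotient.mk _ ζ) * a ∈ kerM τq),
            e (hMinusMk σq a ha) = hMinusMk τq ((Ideal.Quotient.mk _ ζ) * a) hb)) := by
  set s : A →+ A := σ.toAddMonoidHom with hs
  set t : A →+ A := twistL σ (l : A) with ht
  have sa : ∀ a, s a = σ a := fun _ => rfl
  have ta : ∀ a, t a = σ a * l := fun _ => rfl
  set z : A →+ A := AddMonoidHom.mulLeft ζ with hzdef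
  have za : ∀ a, z a = ζ * a := fun _ => rfl
  have hz : ∀ x, z (s x) = t (z x) := fun x => by
    rw [za, za, sa, ta, map_mul]
    nth_rewrite 1 [← hζ]
    ring
  have hss : ∀ x, s (s x) = x := hσ
  have htt : ∀ x, t (t x) = x := fun x => by
    rw [ta, ta, map_mul, hσ, hl, mul_assoc, Units.inv_mul, mul_one]
  have HA : TI s t z := TI.of_isos s t z hz hisoP hisoM
  refine ⟨?_, ?_⟩
  · intro μ hμ hreg
    have st : ∀ a ∈ (Ideal.span {μ} : Ideal A), σ a ∈ (Ideal.span {μ} : Ideal A) := by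
      intro a ha
      obtain ⟨c, rfl⟩ := Ideal.mem_span_singleton'.1 ha
      exact Ideal.mem_span_singleton'.2 ⟨σ c, by rw [map_mul, hμ]⟩
    refine ⟨st, fun a ha => Ideal.mul_mem_right _ _ (st a ha), ?_⟩
    intro σq τq h1 h2
    refine TI.to_isos σq τq (AddMonoidHom.mulLeft (Ideal.Quotient.mk _ ζ)) ?_ ?_
    · intro x
      obtain ⟨x, rfl⟩ := Ideal.Quotient.mk_surjective x
      simp only [AddMonoidHom.coe_mulLeft]
      rw [h1, ← map_mul, ← map_mul, h2]
      exact congrArg _ (hz x)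
    · refine TI.third s t z s t z _ _ _ (AddMonoidHom.mulLeft μ)
        (Ideal.Quotient.mk (Ideal.span {μ})).toAddMonoidHom hreg
        Ideal.Quotient.mk_surjective ?_ ?_ ?_ ?_ ?_ ?_ ?_ ?_ hss htt hz HA HA
      · intro x
        exact Ideal.Quotient.eq_zero_iff_mem.2 (Ideal.mem_span_singleton.2 ⟨x, rfl⟩)
      · intro x hx
        exact Ideal.mem_span_singleton.1 (Ideal.Quotient.eq_zero_iff_mem.1 hx)
      · intro x; simp [sa, hμ]
      · intro x; simp [ta, hμ, mul_assoc]
      · intro x; simp only [za, AddMonoidHom.coe_mulLeft]; ring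
      · intro x; exact (h1 x).symm
      · intro x; exact (h2 x).symm
      · intro x; exact map_mul (Ideal.Quotient.mk _) _ _
  · intro lam hreg hreg2
    have st : ∀ a ∈ (Ideal.span {lam, σ lam} : Ideal A),
        σ a ∈ (Ideal.span {lam, σ lam} : Ideal A) := by
      intro a ha
      obtain ⟨c, d, rfl⟩ := Ideal.mem_span_pair.1 ha
      exact Ideal.mem_span_pair.2 ⟨σ d, σ c, by simp only [map_add, map_mul, hσ]; ring⟩
    have st2 : ∀ a ∈ (Ideal.span {lam, σ lam} : Ideal A),
        σ a * l ∈ (Ideal.span {lam, σ lam} : Ideal A) :=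
      fun a ha => Ideal.mul_mem_right _ _ (st a ha)
    refine ⟨st, st2, ?_⟩
    intro σq τq h1 h2
    refine TI.to_isos σq τq (AddMonoidHom.mulLeft (Ideal.Quotient.mk _ ζ)) ?_ ?_
    · intro x
      obtain ⟨x, rfl⟩ := Ideal.Quotient.mk_surjective x
      simp only [AddMonoidHom.coe_mulLeft]
      rw [h1, ← map_mul, ← map_mul, h2]
      exact congrArg _ (hz x)
    · let J : AddSubgroup A := (Ideal.span {lam, σ lam} : Ideal A).toAddSubgroup
      have hJ : ∀ x, x ∈ J ↔ x ∈ (Ideal.span {lam, σ lam} : Ideal A) := fun x => Iff.rfl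
      let sJ : J →+ J := (s.comp J.subtype).codRestrict J (fun x => st x x.2)
      let tJ : J →+ J := (t.comp J.subtype).codRestrict J (fun x => st2 x x.2)
      let zJ : J →+ J := (z.comp J.subtype).codRestrict J
        (fun x => Ideal.mul_mem_left _ ζ x.2)
      let q : A × A →+ A := ((AddMonoidHom.mulRight lam).comp (AddMonoidHom.fst A A)) +
        ((AddMonoidHom.mulRight (σ lam)).comp (AddMonoidHom.snd A A))
      have qa : ∀ x, q x = x.1 * lam + x.2 * σ lam := fun _ => rfl
      let p : A × A →+ J := q.codRestrict J
        (fun x => (hJ _).2 (Ideal.mem_span_pair.2 ⟨x.1, x.2, rfl⟩))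
      have pa : ∀ x, ((p x : J) : A) = x.1 * lam + x.2 * σ lam := fun _ => rfl
      let i : A →+ A × A := (AddMonoidHom.mulRight (σ lam)).prod
        (-(AddMonoidHom.mulRight lam))
      have ia : ∀ x, i x = (x * σ lam, -(x * lam)) := fun _ => rfl
      have sw : ∀ (f : A →+ A) x, swapInv f x = (f x.2, f x.1) := fun _ _ => rfl
      have HJ : TI sJ tJ zJ := by
        refine TI.third (-s) (-t) z (swapInv s) (swapInv t) (z.prodMap z) sJ tJ zJ i p
          ?_ ?_ ?_ ?_ ?_ ?_ ?_ ?_ ?_ ?_ ?_ ?_ ?_ ⟨HA.2, ?_⟩ (TI.swap s t z hss htt)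
        · intro x hx
          rw [ia, Prod.mk_eq_zero, neg_eq_zero, mul_comm x lam] at hx
          exact hreg x hx.2
        · rintro ⟨y, hy⟩
          obtain ⟨c, d, rfl⟩ := Ideal.mem_span_pair.1 hy
          exact ⟨(c, d), rfl⟩
        · intro x
          apply Subtype.ext
          rw [pa, ia]
          change x * σ lam * lam + -(x * lam) * σ lam = 0
          ring
        · rintro ⟨a, b⟩ hx
          have hx' : a * lam + b * σ lam = 0 := congrArg Subtype.val hx
          obtain ⟨c, hc⟩ := Ideal.mem_span_singleton.1 (hreg2 b
            (Ideal.mem_span_singleton.2 ⟨-a, by linear_combination hx'⟩))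
          have := hreg (a + c * σ lam) (by rw [hc] at hx'; linear_combination hx')
          refine ⟨-c, ?_⟩
          rw [ia, hc, eq_neg_of_add_eq_zero_left this]
          ext
          · simp
          · simp [mul_comm]
        · intro x
          rw [ia, ia, sw]
          simp only [AddMonoidHom.neg_apply, sa, map_neg, map_mul, hσ]
          ext
          · simp
          · simp
        · intro x
          rw [ia, ia, sw]
          simp only [AddMonoidHom.neg_apply, ta, map_neg, map_mul, hσ]
          ext
          · simp only []; ring
          · simp only []; ring
        · intro x
          rw [ia, ia]
          ext
          · simp [za, mul_assoc]
          · simp [za, mul_assoc]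
        · intro x
          apply Subtype.ext
          change s x.2 * lam + s x.1 * σ lam = σ (x.1 * lam + x.2 * σ lam)
          simp only [sa, map_add, map_mul, hσ]; ring
        · intro x
          apply Subtype.ext
          change t x.2 * lam + t x.1 * σ lam = σ (x.1 * lam + x.2 * σ lam) * l
          simp only [ta, map_add, map_mul, hσ]; ring
        · intro x
          apply Subtype.ext
          change ζ * x.1 * lam + ζ * x.2 * σ lam = ζ * (x.1 * lam + x.2 * σ lam)
          ring
        · intro x; simp [sw, hss]
        · intro x; simp [sw, htt]
        · intro x; simp [sw, hz]
        · rw [neg_neg, neg_neg]; exact HA.1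
      refine TI.third sJ tJ zJ s t z _ _ _ J.subtype
        (Ideal.Quotient.mk (Ideal.span {lam, σ lam})).toAddMonoidHom
        (fun x hx => Subtype.ext hx)
        Ideal.Quotient.mk_surjective ?_ ?_ ?_ ?_ ?_ ?_ ?_ ?_ hss htt hz HJ HA
      · intro x
        exact Ideal.Quotient.eq_zero_iff_mem.2 x.2
      · intro x hx
        exact ⟨⟨x, Ideal.Quotient.eq_zero_iff_mem.1 hx⟩, rfl⟩
      · intro x; rfl
      · intro x; rfl
      · intro x; rfl
      · intro x; exact (h1 x).symm
      · intro x; exact (h2 x).symm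
      · intro x; exact map_mul (Ideal.Quotient.mk _) _ _
end
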